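/- arXiv:2108.03646 — 2 statements merged into one kernel-verified Lean document; each statement's English description precedes it below -/
import Mathlib

section
/- Let Ω ⊂ ℝ² be a bounded open set and let Ω₀ be an open set with closure contained in Ω. Then there exists a constant C > 0, depending only on Ω and Ω₀, such that for every ϵ ∈ (0,1) with the closed ball B̄_{2ϵ^{1/3}} contained in Ω₀, and for every function g that is twice continuously differentiable on Ω with g, |∇g| and Δg square-integrable on Ω and Re ∫_Ω (Δg) · conj(g) dx dy ≤ 0, one has ∫_{B_ϵ} |∇g|² dx dy ≤ C ϵ^{4/3} ∫_Ω |−Δg + g|² dx dy. -/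
open MeasureTheory Real Set

noncomputable section

abbrev E2 : Type := EuclideanSpace ℝ (Fin 2)

/-- The point `(x, y)` in the Euclidean plane. -/
def pt (x y : ℝ) : E2 := !₂[x, y]

/-- The `i`-th partial derivative of `f : ℝ² → ℂ`. -/
def pd (i : Fin 2) (f : E2 → ℂ) (p : E2) : ℂ :=
  fderiv ℝ f p (EuclideanSpace.single i 1)

/-- `|∇f|²` at `p`, i.e. `|∂f/∂x|² + |∂f/∂y|²`. -/
def gradSq (f : E2 → ℂ) (p : E2) : ℝ :=
  ‖pd 0 f p‖ ^ 2 + ‖pd 1 f p‖ ^ 2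

/-- The Laplacian `Δf` at `p`. -/
def lap (f : E2 → ℂ) (p : E2) : ℂ :=
  pd 0 (pd 0 f) p + pd 1 (pd 1 f) p

/-- The point `(τ cos φ, τ sin φ)` on the circle of radius `τ`. -/
def circ (τ φ : ℝ) : E2 := pt (τ * Real.cos φ) (τ * Real.sin φ)


/-- Real partial derivative. -/
def Dr (i : Fin 2) (f : E2 → ℝ) (p : E2) : ℝ := fderiv ℝ f p (EuclideanSpace.single i 1)

lemma Dr_contDiff {f : E2 → ℝ} {n m : WithTop ℕ∞} (hf : ContDiff ℝ n f) (h : m + 1 ≤ n) (i : Fin 2) :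
    ContDiff ℝ m (Dr i f) :=
  (hf.fderiv_right h).clm_apply contDiff_const

lemma Dr_cont {f : E2 → ℝ} (hf : ContDiff ℝ 1 f) (i : Fin 2) : Continuous (Dr i f) :=
  (Dr_contDiff (m := 0) hf (by norm_num) i).continuous

lemma Dr_supp {f : E2 → ℝ} (hf : HasCompactSupport f) (i : Fin 2) :
    HasCompactSupport (Dr i f) :=
  hf.fderiv_apply ℝ _

lemma Dr_mul {f g : E2 → ℝ} {p : E2} (hf : DifferentiableAt ℝ f p) (hg : DifferentiableAt ℝ g p)
    (i : Fin 2) : Dr i (fun x => f x * g x) p = f p * Dr i g p + Dr i f p * g p := by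
  unfold Dr
  rw [fderiv_fun_mul hf hg]
  simp [mul_comm]

lemma Dr_add {f g : E2 → ℝ} {p : E2} (hf : DifferentiableAt ℝ f p) (hg : DifferentiableAt ℝ g p)
    (i : Fin 2) : Dr i (fun x => f x + g x) p = Dr i f p + Dr i g p := by
  unfold Dr
  rw [fderiv_fun_add hf hg]
  simp

lemma Dr_congr {f g : E2 → ℝ} {p : E2} (h : f =ᶠ[nhds p] g) (i : Fin 2) : Dr i f p = Dr i g p := by
  unfold Dr
  rw [h.fderiv_eq]

lemma Dr_congr' {f g : E2 → ℝ} {p : E2} (h : f =ᶠ[nhds p] g) (i : Fin 2) :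
    Dr i f =ᶠ[nhds p] Dr i g := by
  filter_upwards [h.eventuallyEq_nhds] with q hq using Dr_congr hq i

lemma Dr_symm {f : E2 → ℝ} (hf : ContDiff ℝ 2 f) (i j : Fin 2) (p : E2) :
    Dr i (Dr j f) p = Dr j (Dr i f) p := by
  have hd : DifferentiableAt ℝ (fderiv ℝ f) p :=
    ((hf.fderiv_right (m := 1) (by norm_num)).differentiable (by norm_num)) p
  have key : ∀ i j : Fin 2, Dr i (Dr j f) p =
      fderiv ℝ (fderiv ℝ f) p (EuclideanSpace.single i 1) (EuclideanSpace.single j 1) := by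
    intro i j
    unfold Dr
    rw [fderiv_clm_apply hd (by fun_prop)]
    simp
  rw [key, key]
  exact (hf.contDiffAt.isSymmSndFDerivAt (by simp)).eq _ _

lemma int_mul {f g : E2 → ℝ} (hf : Continuous f) (hg : Continuous g) (h : HasCompactSupport f) :
    Integrable (fun x => f x * g x) :=
  (hf.mul hg).integrable_of_hasCompactSupport h.mul_right

lemma int_mul' {f g : E2 → ℝ} (hf : Continuous f) (hg : Continuous g) (h : HasCompactSupport g) :
    Integrable (fun x => f x * g x) :=
  (hf.mul hg).integrable_of_hasCompactSupport h.mul_left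

lemma ibp {f g : E2 → ℝ} (hf : ContDiff ℝ 1 f) (hg : ContDiff ℝ 1 g) (h : HasCompactSupport f)
    (i : Fin 2) : ∫ x, f x * Dr i g x = - ∫ x, Dr i f x * g x :=
  integral_mul_fderiv_eq_neg_fderiv_mul_of_integrable
    (int_mul (Dr_cont hf i) hg.continuous (Dr_supp h i))
    (int_mul hf.continuous (Dr_cont hg i) h) (int_mul hf.continuous hg.continuous h)
    (fun x _ => hf.differentiable (by norm_num) x) (fun x _ => hg.differentiable (by norm_num) x)

lemma swap {f h : E2 → ℝ} (hf : ContDiff ℝ 1 f) (hh : ContDiff ℝ 1 h) (sf : HasCompactSupport f)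
    (sh : HasCompactSupport h) (i j : Fin 2) :
    ∫ x, Dr i f x * Dr j h x = ∫ x, Dr j f x * Dr i h x := by
  obtain ⟨C, hC⟩ := hf.lipschitzWith_of_hasCompactSupport sf (by norm_num)
  obtain ⟨D, hD⟩ := hh.lipschitzWith_of_hasCompactSupport sh (by norm_num)
  set e : E2 := EuclideanSpace.single i 1 with he
  have l1 := hC.integral_inv_smul_sub_mul_tendsto_integral_lineDeriv_mul' (μ := volume) sf
    (Dr_cont hh j) e
  have l2 := (hD.integral_inv_smul_sub_mul_tendsto_integral_lineDeriv_mul' (μ := volume) sh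
    (Dr_cont hf j) (-e)).neg
  have e1 : ∫ x, lineDeriv ℝ f x e * Dr j h x = ∫ x, Dr i f x * Dr j h x := by
    refine integral_congr_ae (Filter.Eventually.of_forall fun x => ?_)
    simp only
    rw [(hf.differentiable (by norm_num) x).lineDeriv_eq_fderiv]
    rfl
  have e2 : -∫ x, lineDeriv ℝ h x (-e) * Dr j f x = ∫ x, Dr j f x * Dr i h x := by
    rw [← integral_neg]
    refine integral_congr_ae (Filter.Eventually.of_forall fun x => ?_)
    simp only
    rw [(hh.differentiable (by norm_num) x).lineDeriv_eq_fderiv]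
    simp [Dr, he, mul_comm]
  rw [e1] at l1
  rw [e2] at l2
  refine tendsto_nhds_unique l1 (l2.congr fun t => ?_)
  have cf : ContDiff ℝ 1 (fun x => f (x + t • e)) := hf.comp (contDiff_id.add contDiff_const)
  have sft : HasCompactSupport (fun x => f (x + t • e)) :=
    sf.comp_homeomorph (Homeomorph.addRight (t • e))
  have d : ∀ x, Dr j (fun x => f (x + t • e)) x = Dr j f (x + t • e) := by
    intro x
    unfold Dr
    rw [fderiv_comp_add_right]
  have c := Dr_cont hf j
  have c' : Continuous fun x => Dr j f (x + t • e) := c.comp (by fun_prop)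
  have A := ibp cf hh sft j
  have B := ibp hf hh sf j
  simp only [d] at A
  have T : ∫ x, Dr j f (x + t • e) * h x = ∫ x, Dr j f x * h (x + t • (-e)) := by
    rw [← integral_add_right_eq_self (fun x => Dr j f x * h (x + t • (-e))) (t • e)]
    simp
  have ch : Continuous fun x => h (x + t • (-e)) := hh.continuous.comp (by fun_prop)
  have L : ∫ x, t⁻¹ • (f (x + t • e) - f x) * Dr j h x
      = t⁻¹ * (∫ x, f (x + t • e) * Dr j h x) - t⁻¹ * ∫ x, f x * Dr j h x := by
    rw [← integral_const_mul, ← integral_const_mul, ← integral_sub]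
    · congr 1; ext x; simp; ring
    · exact (int_mul cf.continuous (Dr_cont hh j) sft).const_mul _
    · exact (int_mul hf.continuous (Dr_cont hh j) sf).const_mul _
  have R : ∫ x, t⁻¹ • (h (x + t • -e) - h x) * Dr j f x
      = t⁻¹ * (∫ x, Dr j f x * h (x + t • -e)) - t⁻¹ * ∫ x, Dr j f x * h x := by
    rw [← integral_const_mul, ← integral_const_mul, ← integral_sub]
    · congr 1; ext x; simp; ring
    · exact (int_mul c ch (Dr_supp sf j)).const_mul _
    · exact (int_mul c hh.continuous (Dr_supp sf j)).const_mul _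
  rw [L, R, A, B, T]
  ring

lemma int_cs {f : E2 → ℝ} (hf : Continuous f) (h : HasCompactSupport f) : Integrable f :=
  hf.integrable_of_hasCompactSupport h

/-- The `L²` norm of the Hessian is bounded by that of the Laplacian. -/
lemma hess {u : E2 → ℝ} (hu : ContDiff ℝ 2 u) (su : HasCompactSupport u) :
    ∫ x, ((Dr 0 (Dr 0 u) x) ^ 2 + (Dr 1 (Dr 0 u) x) ^ 2
      + (Dr 0 (Dr 1 u) x) ^ 2 + (Dr 1 (Dr 1 u) x) ^ 2)
      = ∫ x, (Dr 0 (Dr 0 u) x + Dr 1 (Dr 1 u) x) ^ 2 := by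
  have c1 : ∀ i, ContDiff ℝ 1 (Dr i u) := fun i => Dr_contDiff hu (by norm_num) i
  have c2 : ∀ i j, Continuous (Dr i (Dr j u)) := fun i j => Dr_cont (c1 j) i
  have s2 : ∀ i j, HasCompactSupport (Dr i (Dr j u)) := fun i j => Dr_supp (Dr_supp su j) i
  have I : ∀ i j k l, Integrable (fun x => Dr i (Dr j u) x * Dr k (Dr l u) x) :=
    fun i j k l => int_mul (c2 i j) (c2 k l) (s2 i j)
  have S := swap (c1 0) (c1 1) (Dr_supp su 0) (Dr_supp su 1) 0 1
  have E : ∫ x, Dr 1 (Dr 0 u) x * Dr 0 (Dr 1 u) x = ∫ x, Dr 1 (Dr 0 u) x * Dr 1 (Dr 0 u) x := by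
    congr 1; ext x; rw [Dr_symm hu 0 1 x]
  have E' : (∫ x, ((Dr 0 (Dr 0 u) x) ^ 2 + (Dr 1 (Dr 0 u) x) ^ 2
      + (Dr 0 (Dr 1 u) x) ^ 2 + (Dr 1 (Dr 1 u) x) ^ 2))
      = ∫ x, (Dr 0 (Dr 0 u) x * Dr 0 (Dr 0 u) x + 2 * (Dr 1 (Dr 0 u) x * Dr 1 (Dr 0 u) x)
        + Dr 1 (Dr 1 u) x * Dr 1 (Dr 1 u) x) := by
    congr 1; ext x; rw [Dr_symm hu 0 1 x]; ring
  have F : (∫ x, (Dr 0 (Dr 0 u) x + Dr 1 (Dr 1 u) x) ^ 2)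
      = ∫ x, (Dr 0 (Dr 0 u) x * Dr 0 (Dr 0 u) x + 2 * (Dr 0 (Dr 0 u) x * Dr 1 (Dr 1 u) x)
        + Dr 1 (Dr 1 u) x * Dr 1 (Dr 1 u) x) := by
    congr 1; ext x; ring
  rw [E', F, integral_add ((I 0 0 0 0).fun_add ((I 1 0 1 0).const_mul 2)) (I 1 1 1 1),
    integral_add (I 0 0 0 0) ((I 1 0 1 0).const_mul 2),
    integral_add ((I 0 0 0 0).fun_add ((I 0 0 1 1).const_mul 2)) (I 1 1 1 1),
    integral_add (I 0 0 0 0) ((I 0 0 1 1).const_mul 2), integral_const_mul, integral_const_mul,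
    S, E]

/-- Caccioppoli identity in one direction. -/
lemma cacc1 {η a : E2 → ℝ} (hη : ContDiff ℝ 2 η) (sη : HasCompactSupport η) (ha : ContDiff ℝ 2 a)
    (i : Fin 2) :
    ∫ x, η x * (Dr i a x) ^ 2
      = (1/2) * (∫ x, Dr i (Dr i η) x * (a x) ^ 2) - ∫ x, η x * a x * Dr i (Dr i a) x := by
  have ha1 : ContDiff ℝ 1 a := ha.of_le (by norm_num)
  have hη1 : ContDiff ℝ 1 η := hη.of_le (by norm_num)
  have da : ∀ x, DifferentiableAt ℝ a x := fun x => ha1.differentiable (by norm_num) x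
  have dη : ∀ x, DifferentiableAt ℝ η x := fun x => hη1.differentiable (by norm_num) x
  have A := ibp (hη1.mul ha1) (Dr_contDiff (m := 1) ha (by norm_num) i) (sη.mul_right) i
  have B := ibp (Dr_contDiff (m := 1) hη (by norm_num) i) (ha1.mul ha1) (Dr_supp sη i) i
  simp only [Dr_mul (dη _) (da _), Dr_mul (da _) (da _)] at A B
  have cη := hη1.continuous
  have ca := ha1.continuous
  have cDη := Dr_cont hη1 i
  have cDa := Dr_cont ha1 i
  have I1 : Integrable fun x => η x * (Dr i a x) ^ 2 := int_mul cη (cDa.pow 2) sη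
  have I2 : Integrable fun x => Dr i η x * (a x * Dr i a x) :=
    int_mul cDη (ca.mul cDa) (Dr_supp sη i)
  have e1 : ∫ x, (η x * Dr i a x + Dr i η x * a x) * Dr i a x
      = (∫ x, η x * (Dr i a x) ^ 2) + ∫ x, Dr i η x * (a x * Dr i a x) := by
    rw [← integral_add I1 I2]; congr 1; ext x; ring
  have e2 : ∫ x, Dr i η x * (a x * Dr i a x + Dr i a x * a x)
      = 2 * ∫ x, Dr i η x * (a x * Dr i a x) := by
    rw [← integral_const_mul]; congr 1; ext x; ring
  have e3 : ∫ x, Dr i (Dr i η) x * (a x * a x) = ∫ x, Dr i (Dr i η) x * (a x) ^ 2 := by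
    congr 1; ext x; ring
  linarith

lemma int_normsq {F : Type*} [NormedAddCommGroup F] {f : E2 → F} (hf : Continuous f)
    (h : HasCompactSupport f) : Integrable (fun x => ‖f x‖ ^ 2) := by
  have c : Continuous (fun x => ‖f x‖ ^ 2) := by fun_prop
  refine c.integrable_of_hasCompactSupport (h.mono fun x hx => ?_)
  intro h0
  apply hx
  simp [h0]

lemma int_sq {f : E2 → ℝ} (hf : Continuous f)
    (h : HasCompactSupport f) : Integrable (fun x => (f x) ^ 2) := by
  simpa using int_normsq hf h

lemma norm_fderiv_sq (v : E2 → ℝ) (x : E2) :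
    ‖fderiv ℝ v x‖ ^ 2 ≤ (Dr 0 v x) ^ 2 + (Dr 1 v x) ^ 2 := by
  have h : ‖fderiv ℝ v x‖ ≤ √((Dr 0 v x) ^ 2 + (Dr 1 v x) ^ 2) := by
    refine ContinuousLinearMap.opNorm_le_bound _ (Real.sqrt_nonneg _) fun w => ?_
    have hw : w = w 0 • EuclideanSpace.single 0 (1:ℝ) + w 1 • EuclideanSpace.single 1 (1:ℝ) := by
      ext i; fin_cases i <;> simp
    have e : fderiv ℝ v x w = w 0 * Dr 0 v x + w 1 * Dr 1 v x := by
      conv_lhs => rw [hw]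
      simp [Dr]
    rw [e, EuclideanSpace.norm_eq, ← Real.sqrt_mul (by positivity), Real.norm_eq_abs]
    apply Real.abs_le_sqrt
    simp only [Fin.sum_univ_two, Real.norm_eq_abs, sq_abs]
    nlinarith [sq_nonneg (w 0 * Dr 1 v x - w 1 * Dr 0 v x)]
  calc ‖fderiv ℝ v x‖ ^ 2 ≤ (√((Dr 0 v x) ^ 2 + (Dr 1 v x) ^ 2)) ^ 2 := by gcongr
    _ = _ := Real.sq_sqrt (by positivity)

lemma eLp_sq {F : Type*} [NormedAddCommGroup F] {μ : Measure E2} (f : E2 → F)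
    (hf : Integrable (fun x => ‖f x‖ ^ 2) μ) :
    (eLpNorm f 2 μ) ^ (2:ℝ) = ENNReal.ofReal (∫ x, ‖f x‖ ^ 2 ∂μ) := by
  have := eLpNorm_nnreal_pow_eq_lintegral (f := f) (μ := μ) (p := 2) (by norm_num)
  simp only [NNReal.coe_ofNat, ENNReal.coe_ofNat] at this
  rw [this, ofReal_integral_eq_lintegral_ofReal hf (Filter.Eventually.of_forall fun x => by positivity)]
  congr 1; ext x
  rw [ENNReal.ofReal_pow (norm_nonneg _), ofReal_norm, ← ENNReal.rpow_natCast]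
  norm_num

lemma gns_one {v : E2 → ℝ} (hv : ContDiff ℝ 1 v) (B : Set E2) :
    eLpNorm v 2 (volume.restrict B) ≤ eLpNorm v 6 volume * (volume B) ^ ((1:ℝ)/3) := by
  have := eLpNorm_le_eLpNorm_mul_rpow_measure_univ (p := 2) (q := 6) (by norm_num)
    (hv.continuous.aestronglyMeasurable (μ := volume.restrict B))
  refine this.trans ?_
  rw [Measure.restrict_apply_univ]
  norm_num
  gcongr
  exact Measure.restrict_le_self

lemma gns_two : ∃ G : NNReal, ∀ v : E2 → ℝ, ContDiff ℝ 1 v → HasCompactSupport v →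
    eLpNorm v 6 volume ≤ G * eLpNorm (fderiv ℝ v) (3/2 : NNReal) volume := by
  refine ⟨SNormLESNormFDerivOfEqConst ℝ (volume : Measure E2) ((3/2 : NNReal) : ℝ),
    fun v hv sv => ?_⟩
  have := eLpNorm_le_eLpNorm_fderiv_of_eq (volume : Measure E2) hv sv (p := 3/2) (p' := 6)
    (by rw [← NNReal.coe_le_coe]; norm_num) (by simp) (by simp; norm_num)
  simpa only [ENNReal.coe_ofNat] using this

lemma gns_three {v : E2 → ℝ} (hv : ContDiff ℝ 1 v) {S : Set E2} (hvS : tsupport v ⊆ S) :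
    eLpNorm (fderiv ℝ v) (3/2 : NNReal) volume
      ≤ eLpNorm (fderiv ℝ v) 2 volume * (volume S) ^ ((1:ℝ)/6) := by
  have cf : Continuous (fderiv ℝ v) := hv.continuous_fderiv (by norm_num)
  have hs : Function.support (fderiv ℝ v) ⊆ S := (support_fderiv_subset ℝ).trans hvS
  have hr := eLpNorm_restrict_eq_of_support_subset (f := fderiv ℝ v)
    (p := ((3/2:NNReal):ENNReal)) (μ := volume) (s := S) hs
  rw [← hr]
  have := eLpNorm_le_eLpNorm_mul_rpow_measure_univ (p := (3/2 : NNReal)) (q := 2)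
    (by rw [← ENNReal.coe_ofNat, ENNReal.coe_le_coe, ← NNReal.coe_le_coe]; norm_num)
    (cf.aestronglyMeasurable (μ := volume.restrict S))
  refine this.trans ?_
  rw [Measure.restrict_apply_univ]
  have : 1 / ((3/2 : NNReal) : ENNReal).toReal - 1 / (2:ENNReal).toReal = 1/6 := by
    simp; norm_num
  rw [this]
  gcongr
  exact Measure.restrict_le_self

lemma gns (S : Set E2) (hS : IsCompact S) : ∃ C > 0, ∀ v : E2 → ℝ, ContDiff ℝ 1 v →
    tsupport v ⊆ S → ∀ ε : ℝ, 0 < ε →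
    ∫ x in Metric.ball (0:E2) ε, (v x) ^ 2
      ≤ C * ε ^ ((4:ℝ)/3) * ∫ x, ((Dr 0 v x) ^ 2 + (Dr 1 v x) ^ 2) := by
  obtain ⟨G, hG⟩ := gns_two
  obtain ⟨K, hK⟩ : ∃ K : ENNReal, K = ((G : ENNReal) * (volume S) ^ ((1:ℝ)/6)) ^ (2:ℝ) *
    (volume (Metric.ball (0:E2) 1)) ^ ((2:ℝ)/3) := ⟨_, rfl⟩
  have hKfin : K ≠ ⊤ := by
    rw [hK]
    apply ENNReal.mul_ne_top
    · apply ENNReal.rpow_ne_top_of_nonneg (by norm_num)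
      apply ENNReal.mul_ne_top ENNReal.coe_ne_top
      exact ENNReal.rpow_ne_top_of_nonneg (by norm_num) hS.measure_lt_top.ne
    · exact ENNReal.rpow_ne_top_of_nonneg (by norm_num) measure_ball_lt_top.ne
  refine ⟨K.toReal + 1, by positivity, fun v hv hvS ε hε => ?_⟩
  have sv : HasCompactSupport v := hS.of_isClosed_subset (isClosed_tsupport v) hvS
  have cf : Continuous (fderiv ℝ v) := hv.continuous_fderiv (by norm_num)
  have sf : HasCompactSupport (fderiv ℝ v) := sv.fderiv ℝ
  obtain ⟨B, hBdef⟩ : ∃ B, B = Metric.ball (0:E2) ε := ⟨_, rfl⟩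
  rw [← hBdef]
  have h1 := gns_one hv B
  have h2 := hG v hv sv
  have h3 := gns_three hv hvS
  have h4 : eLpNorm v 2 (volume.restrict B) ≤ (G * (volume S) ^ ((1:ℝ)/6)) * (volume B) ^ ((1:ℝ)/3)
      * eLpNorm (fderiv ℝ v) 2 volume := by
    calc _ ≤ eLpNorm v 6 volume * (volume B) ^ ((1:ℝ)/3) := h1
      _ ≤ (G * (eLpNorm (fderiv ℝ v) 2 volume * (volume S) ^ ((1:ℝ)/6))) * (volume B) ^ ((1:ℝ)/3) := by
        gcongr
        exact h2.trans (by gcongr)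
      _ = _ := by ring
  have hB : (volume B) ^ ((2:ℝ)/3)
      = ENNReal.ofReal (ε ^ ((4:ℝ)/3)) * (volume (Metric.ball (0:E2) 1)) ^ ((2:ℝ)/3) := by
    rw [hBdef, Measure.addHaar_ball _ _ hε.le, ENNReal.mul_rpow_of_nonneg _ _ (by norm_num)]
    congr 1
    rw [ENNReal.ofReal_rpow_of_pos (by positivity)]
    congr 1
    simp only [finrank_euclideanSpace, Fintype.card_fin]
    rw [← Real.rpow_natCast, ← Real.rpow_mul hε.le]
    norm_num
  have iv : Integrable (fun x => ‖v x‖ ^ 2) := int_normsq hv.continuous sv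
  have ifd : Integrable (fun x => ‖fderiv ℝ v x‖ ^ 2) := int_normsq cf sf
  have iD : ∀ i, Integrable (fun x => (Dr i v x) ^ 2) := fun i =>
    int_sq (Dr_cont hv i) (Dr_supp sv i)
  have h5 := ENNReal.rpow_le_rpow h4 (z := 2) (by norm_num)
  rw [eLp_sq v iv.integrableOn, ENNReal.mul_rpow_of_nonneg _ _ (by norm_num), eLp_sq _ ifd,
    ENNReal.mul_rpow_of_nonneg _ _ (by norm_num), ← ENNReal.rpow_mul (volume B)] at h5
  have h6 : ((1:ℝ)/3) * 2 = 2/3 := by norm_num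
  rw [h6, hB] at h5
  have h7 : ((G:ENNReal) * (volume S) ^ ((1:ℝ)/6)) ^ (2:ℝ) *
      (ENNReal.ofReal (ε ^ ((4:ℝ)/3)) * (volume (Metric.ball (0:E2) 1)) ^ ((2:ℝ)/3))
      * ENNReal.ofReal (∫ x, ‖fderiv ℝ v x‖ ^ 2)
      = ENNReal.ofReal (K.toReal * ε ^ ((4:ℝ)/3) * ∫ x, ‖fderiv ℝ v x‖ ^ 2) := by
    rw [ENNReal.ofReal_mul (by positivity), ENNReal.ofReal_mul (by positivity),
      ENNReal.ofReal_toReal hKfin, hK]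
    ring
  rw [h7] at h5
  have nn : 0 ≤ ∫ x, ‖fderiv ℝ v x‖ ^ 2 := integral_nonneg fun x => by positivity
  have h8 := (ENNReal.ofReal_le_ofReal_iff (by positivity)).1 h5
  have h9 : ∫ x, ‖fderiv ℝ v x‖ ^ 2 ≤ ∫ x, ((Dr 0 v x) ^ 2 + (Dr 1 v x) ^ 2) :=
    integral_mono ifd ((iD 0).add (iD 1)) fun x => norm_fderiv_sq v x
  simp only [Real.norm_eq_abs, sq_abs] at h8
  refine h8.trans ?_
  have hpos : 0 ≤ ε ^ ((4:ℝ)/3) := by positivity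
  have h10 : K.toReal * ε ^ ((4:ℝ)/3) ≤ (K.toReal + 1) * ε ^ ((4:ℝ)/3) :=
    mul_le_mul_of_nonneg_right (by linarith) hpos
  exact mul_le_mul h10 h9 nn (by positivity)

/-- Real squared gradient. -/
def gr (a : E2 → ℝ) (x : E2) : ℝ := (Dr 0 a x) ^ 2 + (Dr 1 a x) ^ 2

/-- Real Laplacian. -/
def lpl (a : E2 → ℝ) (x : E2) : ℝ := Dr 0 (Dr 0 a) x + Dr 1 (Dr 1 a) x

lemma gr_cont {a : E2 → ℝ} (ha : ContDiff ℝ 1 a) : Continuous (gr a) :=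
  ((Dr_cont ha 0).pow 2).add ((Dr_cont ha 1).pow 2)

lemma lpl_cont {a : E2 → ℝ} (ha : ContDiff ℝ 2 a) : Continuous (lpl a) :=
  (Dr_cont (Dr_contDiff ha (by norm_num) 0) 0).add (Dr_cont (Dr_contDiff ha (by norm_num) 1) 1)

lemma lp_supp {a : E2 → ℝ} (h : HasCompactSupport a) : HasCompactSupport (lpl a) :=
  (Dr_supp (Dr_supp h 0) 0).add (Dr_supp (Dr_supp h 1) 1)

lemma bdd_cs {f : E2 → ℝ} (hf : Continuous f) (h : HasCompactSupport f) :
    ∃ B ≥ 0, ∀ x, |f x| ≤ B := by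
  obtain ⟨C, hC⟩ := hf.bounded_above_of_compact_support h
  exact ⟨|C|, abs_nonneg _, fun x => (hC x).trans (le_abs_self _)⟩

lemma Dr_zero_off {f : E2 → ℝ} {x : E2} (hx : x ∉ tsupport f) (i : Fin 2) : Dr i f x = 0 := by
  have : f =ᶠ[nhds x] fun _ => 0 := notMem_tsupport_iff_eventuallyEq.1 hx
  rw [Dr_congr this]; simp [Dr]

lemma lp_zero_off {f : E2 → ℝ} {x : E2} (hx : x ∉ tsupport f) : lpl f x = 0 := by
  have : f =ᶠ[nhds x] fun _ => 0 := notMem_tsupport_iff_eventuallyEq.1 hx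
  unfold lpl
  have h0 : ∀ i, Dr i (fun _ : E2 => (0:ℝ)) = fun _ => 0 := by intro i; ext y; simp [Dr]
  rw [Dr_congr (Dr_congr' this 0), Dr_congr (Dr_congr' this 1)]
  simp [h0]

lemma cacc {η : E2 → ℝ} (hη : ContDiff ℝ 2 η) (sη : HasCompactSupport η)
    (h01 : ∀ x, 0 ≤ η x ∧ η x ≤ 1) :
    ∃ C > 0, ∀ a : E2 → ℝ, ContDiff ℝ 2 a →
      ∫ x, η x * gr a x ≤ C * ∫ x in tsupport η, ((a x) ^ 2 + (lpl a x) ^ 2) := by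
  obtain ⟨B, hB0, hB⟩ := bdd_cs (lpl_cont hη) (lp_supp sη)
  refine ⟨B + 1, by positivity, fun a ha => ?_⟩
  have ha1 : ContDiff ℝ 1 a := ha.of_le (by norm_num)
  have ca := ha.continuous
  have cη := hη.continuous
  have c2 : ∀ i, Continuous (Dr i (Dr i a)) := fun i => Dr_cont (Dr_contDiff ha (by norm_num) i) i
  have c2η : ∀ i, Continuous (Dr i (Dr i η)) := fun i => Dr_cont (Dr_contDiff hη (by norm_num) i) i
  have s2η : ∀ i, HasCompactSupport (Dr i (Dr i η)) := fun i => Dr_supp (Dr_supp sη i) i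
  have I1 : ∀ i, Integrable fun x => η x * (Dr i a x) ^ 2 := fun i =>
    int_mul cη ((Dr_cont ha1 i).pow 2) sη
  have I2 : ∀ i, Integrable fun x => Dr i (Dr i η) x * (a x) ^ 2 := fun i =>
    int_mul (c2η i) (ca.pow 2) (s2η i)
  have I3 : ∀ i, Integrable fun x => η x * a x * Dr i (Dr i a) x := fun i =>
    int_mul (cη.mul ca) (c2 i) sη.mul_right
  have e1 : ∫ x, η x * gr a x = ∫ x, ((1/2) * (lpl η x * (a x) ^ 2) - η x * a x * lpl a x) := by
    have l : ∫ x, η x * gr a x = (∫ x, η x * (Dr 0 a x) ^ 2) + ∫ x, η x * (Dr 1 a x) ^ 2 := by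
      rw [← integral_add (I1 0) (I1 1)]; congr 1; ext x; simp only [gr]; ring
    have I4 : ∀ i, Integrable fun x =>
        (1/2) * (Dr i (Dr i η) x * (a x) ^ 2) - η x * a x * Dr i (Dr i a) x :=
      fun i => ((I2 i).const_mul _).sub (I3 i)
    rw [l, cacc1 hη sη ha 0, cacc1 hη sη ha 1, ← integral_const_mul, ← integral_const_mul,
      ← integral_sub ((I2 0).const_mul _) (I3 0), ← integral_sub ((I2 1).const_mul _) (I3 1),
      ← integral_add (I4 0) (I4 1)]
    congr 1; ext x; simp only [lpl]; ring
  have ms : MeasurableSet (tsupport η) := (isClosed_tsupport η).measurableSet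
  rw [e1, ← integral_const_mul, ← integral_indicator ms]
  have clp := lpl_cont ha
  have clpη := lpl_cont hη
  refine integral_mono ?_ ?_ fun x => ?_
  · exact ((int_mul clpη (ca.pow 2) (lp_supp sη)).const_mul _).sub
      (int_mul (cη.mul ca) clp sη.mul_right)
  · rw [integrable_indicator_iff ms]
    exact ContinuousOn.integrableOn_compact sη (by fun_prop)
  · by_cases hx : x ∈ tsupport η
    · rw [indicator_of_mem hx]
      simp only
      obtain ⟨h0, h1⟩ := h01 x
      have b := hB x
      have b1 : lpl η x * (a x) ^ 2 ≤ B * (a x) ^ 2 :=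
        mul_le_mul_of_nonneg_right ((le_abs_self _).trans b) (sq_nonneg _)
      have b2 : -(η x * a x * lpl a x) ≤ (1/2) * ((a x) ^ 2 + (lpl a x) ^ 2) := by
        have : 0 ≤ η x * (a x + lpl a x) ^ 2 := by positivity
        have : 0 ≤ (1 - η x) * ((a x) ^ 2 + (lpl a x) ^ 2) := 
          mul_nonneg (by linarith) (by positivity)
        nlinarith
      have : 0 ≤ B * (lpl a x) ^ 2 := by positivity
      have : 0 ≤ B * (a x) ^ 2 := by positivity
      nlinarith [sq_nonneg (a x), sq_nonneg (lpl a x)]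
    · rw [indicator_of_notMem hx]
      simp [lp_zero_off hx, image_eq_zero_of_notMem_tsupport hx]

lemma lp_mul {χ a : E2 → ℝ} (hχ : ContDiff ℝ 2 χ) (ha : ContDiff ℝ 2 a) (x : E2) :
    lpl (fun y => χ y * a y) x = χ x * lpl a x + 2 * (Dr 0 χ x * Dr 0 a x + Dr 1 χ x * Dr 1 a x)
      + lpl χ x * a x := by
  have d : ∀ {f : E2 → ℝ}, ContDiff ℝ 2 f → Differentiable ℝ f :=
    fun h => h.differentiable (by norm_num)
  have d1 : ∀ {f : E2 → ℝ}, ContDiff ℝ 2 f → ∀ i, Differentiable ℝ (Dr i f) :=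
    fun h i => (Dr_contDiff (m := 1) h (by norm_num) i).differentiable (by norm_num)
  have e : ∀ i, Dr i (fun y => χ y * a y) = fun x => χ x * Dr i a x + Dr i χ x * a x := by
    intro i; ext y; exact Dr_mul (d hχ y) (d ha y) i
  have e2 : ∀ i, Dr i (Dr i (fun y => χ y * a y)) x =
      χ x * Dr i (Dr i a) x + 2 * (Dr i χ x * Dr i a x) + Dr i (Dr i χ) x * a x := by
    intro i
    rw [e, Dr_add ((d hχ x).fun_mul (d1 ha i x)) ((d1 hχ i x).fun_mul (d ha x)),
      Dr_mul (d hχ x) (d1 ha i x), Dr_mul (d1 hχ i x) (d ha x)]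
    ring
  simp only [lpl, e2]; ring

lemma lap_cut {χ η : E2 → ℝ} (hχ : ContDiff ℝ 2 χ) (sχ : HasCompactSupport χ)
    (hη : ContDiff ℝ 2 η) (sη : HasCompactSupport η) (h0 : ∀ x, 0 ≤ η x)
    (h1 : ∀ x ∈ tsupport χ, η x = 1) :
    ∃ C > 0, ∀ a : E2 → ℝ, ContDiff ℝ 2 a →
      ∫ x, (lpl (fun y => χ y * a y) x) ^ 2
        ≤ C * ((∫ x, η x * gr a x) + ∫ x in tsupport η, ((a x) ^ 2 + (lpl a x) ^ 2)) := by
  have hχ1 : ContDiff ℝ 1 χ := hχ.of_le (by norm_num)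
  obtain ⟨B1, hB10, hB1⟩ := bdd_cs hχ.continuous sχ
  obtain ⟨B2, hB20, hB2⟩ := bdd_cs (Dr_cont hχ1 0) (Dr_supp sχ 0)
  obtain ⟨B3, hB30, hB3⟩ := bdd_cs (Dr_cont hχ1 1) (Dr_supp sχ 1)
  obtain ⟨B4, hB40, hB4⟩ := bdd_cs (lpl_cont hχ) (lp_supp sχ)
  set B := B1 + B2 + B3 + B4 + 1
  refine ⟨24 * B ^ 2, by positivity, fun a ha => ?_⟩
  have ha1 : ContDiff ℝ 1 a := ha.of_le (by norm_num)
  have ms : MeasurableSet (tsupport η) := (isClosed_tsupport η).measurableSet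
  have ca := ha.continuous
  have clp := lpl_cont ha
  have I1 : Integrable fun x => η x * gr a x := int_mul hη.continuous (gr_cont ha1) sη
  have I2 : Integrable ((tsupport η).indicator fun x => (a x) ^ 2 + (lpl a x) ^ 2) := by
    rw [integrable_indicator_iff ms]
    exact ContinuousOn.integrableOn_compact sη (by fun_prop)
  rw [← integral_indicator ms, ← integral_add I1 I2, ← integral_const_mul]
  have cu : ContDiff ℝ 2 (fun y => χ y * a y) := hχ.mul ha
  have su : HasCompactSupport (fun y => χ y * a y) := sχ.mul_right
  refine integral_mono ?_ ((I1.add I2).const_mul _) fun x => ?_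
  · exact int_sq (lpl_cont cu) (lp_supp su)
  · by_cases hx : x ∈ tsupport χ
    · have hxη : x ∈ tsupport η := subset_tsupport _ (by simp [h1 x hx])
      simp only
      rw [indicator_of_mem hxη, h1 x hx, lp_mul hχ ha, one_mul]
      have s : ∀ {t b : ℝ}, |t| ≤ b → 0 ≤ b → b ≤ B → t ^ 2 ≤ B ^ 2 := by
        intro t b h hb hbB
        rw [← sq_abs]
        gcongr
        linarith
      have s1 := s (hB1 x) hB10 (by simp only [B]; linarith)
      have s2 := s (hB2 x) hB20 (by simp only [B]; linarith)
      have s3 := s (hB3 x) hB30 (by simp only [B]; linarith)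
      have s4 := s (hB4 x) hB40 (by simp only [B]; linarith)
      generalize B ^ 2 = Q at *
      simp only [gr]
      generalize χ x = k at *
      generalize Dr 0 χ x = k0 at *
      generalize Dr 1 χ x = k1 at *
      generalize lpl χ x = kl at *
      generalize lpl a x = l at *
      generalize Dr 0 a x = p at *
      generalize Dr 1 a x = q at *
      generalize a x = z at *
      have t : (k * l + 2 * (k0 * p + k1 * q) + kl * z) ^ 2
          ≤ 4 * (k ^ 2 * l ^ 2 + 4 * (k0 ^ 2 * p ^ 2) + 4 * (k1 ^ 2 * q ^ 2) + kl ^ 2 * z ^ 2) := by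
        nlinarith [sq_nonneg (k * l - 2 * (k0 * p)), sq_nonneg (k * l - 2 * (k1 * q)),
          sq_nonneg (k * l - kl * z), sq_nonneg (2 * (k0 * p) - 2 * (k1 * q)),
          sq_nonneg (2 * (k0 * p) - kl * z), sq_nonneg (2 * (k1 * q) - kl * z)]
      have u1 := mul_le_mul_of_nonneg_right s1 (sq_nonneg l)
      have u2 := mul_le_mul_of_nonneg_right s2 (sq_nonneg p)
      have u3 := mul_le_mul_of_nonneg_right s3 (sq_nonneg q)
      have u4 := mul_le_mul_of_nonneg_right s4 (sq_nonneg z)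
      have Q0 : 0 ≤ Q := (sq_nonneg _).trans s1
      have v1 := mul_nonneg Q0 (sq_nonneg l)
      have v2 := mul_nonneg Q0 (sq_nonneg p)
      have v3 := mul_nonneg Q0 (sq_nonneg q)
      have v4 := mul_nonneg Q0 (sq_nonneg z)
      nlinarith
    · have : x ∉ tsupport (fun y => χ y * a y) := fun h => hx (tsupport_mul_subset_left h)
      simp only [lp_zero_off this]
      have : 0 ≤ (tsupport η).indicator (fun x => (a x) ^ 2 + (lpl a x) ^ 2) x :=
        indicator_nonneg (fun y _ => by positivity) _
      have := mul_nonneg (h0 x) (show 0 ≤ gr a x by unfold gr; positivity)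
      have : 0 ≤ B ^ 2 := by positivity
      simp only [ne_eq, OfNat.ofNat_ne_zero, not_false_eq_true, zero_pow]
      positivity

open scoped Manifold ContDiff in
lemma cutoff {K U : Set E2} (hK : IsCompact K) (hU : IsOpen U) (h : K ⊆ U) :
    ∃ χ : E2 → ℝ, ContDiff ℝ 2 χ ∧ HasCompactSupport χ ∧ tsupport χ ⊆ U ∧
      (∀ᶠ x in nhdsSet K, χ x = 1) ∧ ∀ x, 0 ≤ χ x ∧ χ x ≤ 1 := by
  obtain ⟨T, hT, hKT, hTU⟩ := exists_compact_between hK hU h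
  obtain ⟨f, f1, f0, fI⟩ := exists_contMDiffMap_one_nhds_of_subset_interior (n := 2)
    (𝓘(ℝ, E2)) hK.isClosed hKT
  have hs : tsupport (f : E2 → ℝ) ⊆ T :=
    closure_minimal (fun x hx => by by_contra h'; exact hx (f0 x h')) hT.isClosed
  exact ⟨f, f.contMDiff.contDiff, hT.of_isClosed_subset (isClosed_tsupport _) hs, hs.trans hTU,
    f1, fun x => fI x⟩

lemma real_main {Ω K : Set E2} (hΩ : IsOpen Ω) (hK : IsCompact K) (hKΩ : K ⊆ Ω) :
    ∃ C > 0, ∃ L : Set E2, IsCompact L ∧ L ⊆ Ω ∧ ∀ a : E2 → ℝ, ContDiff ℝ 2 a →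
      ∀ ε : ℝ, 0 < ε → Metric.ball (0:E2) ε ⊆ K →
      ∫ x in Metric.ball (0:E2) ε, gr a x
        ≤ C * ε ^ ((4:ℝ)/3) * ∫ x in L, ((a x) ^ 2 + (lpl a x) ^ 2) := by
  obtain ⟨χ, hχ, sχ, χΩ, χ1, -⟩ := cutoff hK hΩ hKΩ
  obtain ⟨η, hη, sη, ηΩ, η1, η01⟩ := cutoff sχ.isCompact hΩ χΩ
  obtain ⟨C1, hC1, H1⟩ := gns (tsupport χ) sχ.isCompact
  obtain ⟨C2, hC2, H2⟩ := lap_cut hχ sχ hη sη (fun x => (η01 x).1)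
    (fun x hx => (eventually_nhdsSet_iff_forall.1 η1 x hx).self_of_nhds)
  obtain ⟨C3, hC3, H3⟩ := cacc hη sη η01
  refine ⟨C1 * (C2 * (C3 + 1)), by positivity, tsupport η, sη.isCompact, ηΩ,
    fun a ha ε hε hball => ?_⟩
  have h2 := H2 a ha
  have h3 := H3 a ha
  have cu : ContDiff ℝ 2 (fun y => χ y * a y) := hχ.mul ha
  have su : HasCompactSupport (fun y => χ y * a y) := sχ.mul_right
  have ts : tsupport (fun y => χ y * a y) ⊆ tsupport χ := tsupport_mul_subset_left
  have hu : ∀ x ∈ Metric.ball (0:E2) ε, gr a x = gr (fun y => χ y * a y) x := by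
    intro x hx
    have : a =ᶠ[nhds x] fun y => χ y * a y := by
      filter_upwards [eventually_nhdsSet_iff_forall.1 χ1 x (hball hx)] with y hy
      rw [hy, one_mul]
    simp only [gr, Dr_congr this]
  rw [setIntegral_congr_fun measurableSet_ball hu]
  generalize (fun y => χ y * a y) = u at *
  have c1 : ∀ i, ContDiff ℝ 1 (Dr i u) := fun i => Dr_contDiff cu (by norm_num) i
  have s1 : ∀ i, HasCompactSupport (Dr i u) := fun i => Dr_supp su i
  have t1 : ∀ i, tsupport (Dr i u) ⊆ tsupport χ := fun i =>
    (tsupport_fderiv_apply_subset ℝ _).trans ts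
  have I0 : ∀ i, Integrable fun x => (Dr i u x) ^ 2 := fun i => int_sq (c1 i).continuous (s1 i)
  have I1 : ∀ i j, Integrable fun x => (Dr i (Dr j u) x) ^ 2 := fun i j =>
    int_sq (Dr_cont (c1 j) i) (Dr_supp (s1 j) i)
  have I2 : ∀ j, Integrable fun x => (Dr 0 (Dr j u) x) ^ 2 + (Dr 1 (Dr j u) x) ^ 2 := fun j =>
    (I1 0 j).add (I1 1 j)
  have e : ∫ x in Metric.ball (0:E2) ε, gr u x = (∫ x in Metric.ball (0:E2) ε, (Dr 0 u x) ^ 2)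
      + ∫ x in Metric.ball (0:E2) ε, (Dr 1 u x) ^ 2 := by
    rw [← integral_add (I0 0).integrableOn (I0 1).integrableOn]
    rfl
  have hh : (∫ x, ((Dr 0 (Dr 0 u) x) ^ 2 + (Dr 1 (Dr 0 u) x) ^ 2))
      + (∫ x, ((Dr 0 (Dr 1 u) x) ^ 2 + (Dr 1 (Dr 1 u) x) ^ 2)) = ∫ x, (lpl u x) ^ 2 := by
    have := hess cu su
    rw [← integral_add (I2 0) (I2 1)]
    simp only [lpl]
    rw [← this]
    congr 1; ext x; ring
  have g0 := H1 _ (c1 0) (t1 0) ε hε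
  have g1 := H1 _ (c1 1) (t1 1) ε hε
  have hpos : 0 < ε ^ ((4:ℝ)/3) := by positivity
  set X := ∫ x in tsupport η, ((a x) ^ 2 + (lpl a x) ^ 2)
  calc ∫ x in Metric.ball (0:E2) ε, gr u x
      ≤ C1 * ε ^ ((4:ℝ)/3) * ∫ x, (lpl u x) ^ 2 := by rw [e, ← hh, mul_add]; linarith
    _ ≤ C1 * ε ^ ((4:ℝ)/3) * (C2 * (C3 * X + X)) := by
      apply mul_le_mul_of_nonneg_left _ (by positivity)
      refine h2.trans ?_
      apply mul_le_mul_of_nonneg_left _ (by positivity)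
      linarith
    _ = _ := by ring

lemma pd_cda {f : E2 → ℂ} {n m : WithTop ℕ∞} {x : E2} (hf : ContDiffAt ℝ n f x) (h : m + 1 ≤ n)
    (i : Fin 2) : ContDiffAt ℝ m (pd i f) x :=
  (hf.fderiv_right h).clm_apply contDiffAt_const

lemma pd_congr {f g : E2 → ℂ} {p : E2} (h : f =ᶠ[nhds p] g) (i : Fin 2) :
    pd i f =ᶠ[nhds p] pd i g := by
  filter_upwards [h.eventuallyEq_nhds] with q hq
  unfold pd
  rw [hq.fderiv_eq]

lemma Dr_re {f : E2 → ℂ} {x : E2} (hf : DifferentiableAt ℝ f x) (i : Fin 2) :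
    Dr i (fun y => (f y).re) x = (pd i f x).re := by
  have := (Complex.reCLM.hasFDerivAt.comp x hf.hasFDerivAt).fderiv
  unfold Dr pd
  have e : (fun y => (f y).re) = (⇑Complex.reCLM ∘ f) := rfl
  rw [e, this]; simp

lemma Dr_im {f : E2 → ℂ} {x : E2} (hf : DifferentiableAt ℝ f x) (i : Fin 2) :
    Dr i (fun y => (f y).im) x = (pd i f x).im := by
  have := (Complex.imCLM.hasFDerivAt.comp x hf.hasFDerivAt).fderiv
  unfold Dr pd
  have e : (fun y => (f y).im) = (⇑Complex.imCLM ∘ f) := rfl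
  rw [e, this]; simp

lemma norm_sq_re_im (z : ℂ) : ‖z‖ ^ 2 = z.re ^ 2 + z.im ^ 2 := by
  rw [Complex.sq_norm, Complex.normSq_apply]; ring

lemma split {f : E2 → ℂ} (hf : ContDiff ℝ 2 f) (x : E2) :
    gradSq f x = gr (fun y => (f y).re) x + gr (fun y => (f y).im) x ∧
    ‖lap f x‖ ^ 2 = (lpl (fun y => (f y).re) x) ^ 2 + (lpl (fun y => (f y).im) x) ^ 2 := by
  have d : Differentiable ℝ f := hf.differentiable (by norm_num)
  have d1 : ∀ i, Differentiable ℝ (pd i f) := fun i y =>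
    (pd_cda (m := 1) hf.contDiffAt (by norm_num) i).differentiableAt (by norm_num)
  have e1 : ∀ i, Dr i (fun y => (f y).re) = fun y => (pd i f y).re := fun i => by
    ext y; exact Dr_re (d y) i
  have e2 : ∀ i, Dr i (fun y => (f y).im) = fun y => (pd i f y).im := fun i => by
    ext y; exact Dr_im (d y) i
  constructor
  · simp only [gradSq, gr, e1, e2, norm_sq_re_im]; ring
  · simp only [lap, lpl, e1, e2, norm_sq_re_im, Complex.add_re, Complex.add_im,
      Dr_re (d1 _ x), Dr_im (d1 _ x)]

lemma energy {Ω : Set E2} (hΩ : IsOpen Ω) {g : E2 → ℂ} (hg : ContDiffOn ℝ 2 g Ω)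
    (i1 : IntegrableOn (fun p => ‖g p‖ ^ 2) Ω) (i2 : IntegrableOn (fun p => ‖lap g p‖ ^ 2) Ω)
    (h : (∫ p in Ω, lap g p * (starRingEnd ℂ) (g p)).re ≤ 0) :
    ∫ p in Ω, (‖g p‖ ^ 2 + ‖lap g p‖ ^ 2) ≤ ∫ p in Ω, ‖-lap g p + g p‖ ^ 2 := by
  have cg : ContinuousOn g Ω := hg.continuousOn
  have cl : ContinuousOn (lap g) Ω := by
    intro x hx
    have hx' := hg.contDiffAt (hΩ.mem_nhds hx)
    have : ∀ i, ContinuousAt (pd i (pd i g)) x := fun i =>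
      (pd_cda (m := 0) (pd_cda (m := 1) hx' (by norm_num) i) (by norm_num) i).continuousAt
    exact ((this 0).add (this 1)).continuousWithinAt
  have cl' : ContinuousOn (fun p => lap g p * (starRingEnd ℂ) (g p)) Ω :=
    cl.mul (Complex.continuous_conj.comp_continuousOn cg)
  have i3 : IntegrableOn (fun p => lap g p * (starRingEnd ℂ) (g p)) Ω := by
    refine Integrable.mono' (i1.add i2) (cl'.aestronglyMeasurable hΩ.measurableSet)
      (Filter.Eventually.of_forall fun p => ?_)
    simp only [norm_mul, RCLike.norm_conj, Pi.add_apply]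
    nlinarith [sq_nonneg (‖lap g p‖ - ‖g p‖), sq_nonneg ‖lap g p‖, sq_nonneg ‖g p‖]
  have i4 : IntegrableOn (fun p => (lap g p * (starRingEnd ℂ) (g p)).re) Ω := i3.re
  have e : ∫ p in Ω, (lap g p * (starRingEnd ℂ) (g p)).re
      = (∫ p in Ω, lap g p * (starRingEnd ℂ) (g p)).re := integral_re i3
  have i12 : IntegrableOn (fun p => ‖g p‖ ^ 2 + ‖lap g p‖ ^ 2) Ω := i1.add i2
  have pw : ∀ p, ‖-lap g p + g p‖ ^ 2 = (‖g p‖ ^ 2 + ‖lap g p‖ ^ 2)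
      - 2 * (lap g p * (starRingEnd ℂ) (g p)).re := by
    intro p
    simp only [norm_sq_re_im, Complex.add_re, Complex.add_im, Complex.neg_re, Complex.neg_im,
      Complex.mul_re, Complex.conj_re, Complex.conj_im]
    ring
  simp only [pw]
  rw [integral_sub i12 (i4.const_mul 2), integral_const_mul, e]
  linarith

/-- Lemma 4.3 of the paper. For a bounded open `Ω ⊆ ℝ²` and an open
`Ω₀` compactly contained in `Ω`, there is `C > 0` such that for every `ϵ ∈ (0,1)` with
`B̄_{2ϵ^{1/3}} ⊆ Ω₀` and every `g` twice continuously differentiable on `Ω` with `g`,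
`|∇g|`, `Δg` square-integrable on `Ω` and `Re ∫_Ω (Δg)·conj(g) ≤ 0`, one has
`∫_{B_ϵ} |∇g|² ≤ C ϵ^{4/3} ∫_Ω |−Δg + g|²`. -/
theorem dirichlet_energy_small_ball (Ω Ω₀ : Set E2) (hΩo : IsOpen Ω)
    (hΩb : Bornology.IsBounded Ω) (hΩ₀o : IsOpen Ω₀) (hcl : closure Ω₀ ⊆ Ω) :
    ∃ C > 0, ∀ ϵ : ℝ, 0 < ϵ → ϵ < 1 →
      Metric.closedBall (0 : E2) (2 * ϵ ^ ((1:ℝ)/3)) ⊆ Ω₀ →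
      ∀ g : E2 → ℂ, ContDiffOn ℝ 2 g Ω →
      IntegrableOn (fun p => ‖g p‖ ^ 2) Ω →
      IntegrableOn (fun p => gradSq g p) Ω →
      IntegrableOn (fun p => ‖lap g p‖ ^ 2) Ω →
      (∫ p in Ω, lap g p * (starRingEnd ℂ) (g p)).re ≤ 0 →
      ∫ p in Metric.ball (0 : E2) ϵ, gradSq g p
        ≤ C * ϵ ^ ((4:ℝ)/3) * ∫ p in Ω, ‖-lap g p + g p‖ ^ 2 := by
  have hK : IsCompact (closure Ω₀) :=
    Metric.isCompact_of_isClosed_isBounded isClosed_closure (hΩb.subset hcl)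
  obtain ⟨C, hC, L, hL, hLΩ, H⟩ := real_main hΩo hK hcl
  obtain ⟨ζ, hζ, sζ, ζΩ, ζ1, -⟩ := cutoff (hL.union hK) hΩo (union_subset hLΩ hcl)
  refine ⟨C, hC, fun ϵ hϵ hϵ1 hball g hg i1 i0 i2 h => ?_⟩
  have hB : Metric.ball (0 : E2) ϵ ⊆ closure Ω₀ := by
    refine (Metric.ball_subset_closedBall.trans ?_).trans (hball.trans subset_closure)
    apply Metric.closedBall_subset_closedBall
    have : ϵ ^ (1:ℝ) ≤ ϵ ^ ((1:ℝ)/3) :=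
      Real.rpow_le_rpow_of_exponent_ge hϵ hϵ1.le (by norm_num)
    rw [Real.rpow_one] at this
    linarith
  have hf : ContDiff ℝ 2 (fun y => (ζ y : ℂ) * g y) := by
    rw [contDiff_iff_contDiffAt]
    intro x
    by_cases hx : x ∈ tsupport ζ
    · exact (Complex.ofRealCLM.contDiff.contDiffAt.comp x hζ.contDiffAt).mul
        (hg.contDiffAt (hΩo.mem_nhds (ζΩ hx)))
    · have : (fun y => (ζ y : ℂ) * g y) =ᶠ[nhds x] fun _ => 0 := by
        filter_upwards [notMem_tsupport_iff_eventuallyEq.1 hx] with y hy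
        simp [hy]
      exact contDiffAt_const.congr_of_eventuallyEq this
  have hfg : ∀ x ∈ L ∪ closure Ω₀, (fun y => (ζ y : ℂ) * g y) =ᶠ[nhds x] g := by
    intro x hx
    filter_upwards [eventually_nhdsSet_iff_forall.1 ζ1 x hx] with y hy
    simp [hy]
  generalize (fun y => (ζ y : ℂ) * g y) = f at *
  have ca : ContDiff ℝ 2 (fun y => (f y).re) := Complex.reCLM.contDiff.comp hf
  have cb : ContDiff ℝ 2 (fun y => (f y).im) := Complex.imCLM.contDiff.comp hf
  have Ha := H _ ca ϵ hϵ hB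
  have Hb := H _ cb ϵ hϵ hB
  have S := split hf
  have gB : ∀ x ∈ Metric.ball (0 : E2) ϵ, gradSq g x
      = gr (fun y => (f y).re) x + gr (fun y => (f y).im) x := by
    intro x hx
    have hx' := hfg x (Or.inr (hB hx))
    rw [← (S x).1]
    simp only [gradSq, (pd_congr hx' _).eq_of_nhds]
  have gL : ∀ x ∈ L, ‖g x‖ ^ 2 + ‖lap g x‖ ^ 2
      = (((f x).re) ^ 2 + (lpl (fun y => (f y).re) x) ^ 2)
        + (((f x).im) ^ 2 + (lpl (fun y => (f y).im) x) ^ 2) := by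
    intro x hx
    have hx' := hfg x (Or.inl hx)
    have e1 : lap f x = lap g x := by
      simp only [lap, (pd_congr (pd_congr hx' _) _).eq_of_nhds]
    rw [← e1, (S x).2, ← hx'.eq_of_nhds, norm_sq_re_im]
    ring
  have ga : IntegrableOn (gr fun y => (f y).re) (Metric.ball (0 : E2) ϵ) :=
    ((gr_cont (ca.of_le (by norm_num))).continuousOn.integrableOn_compact
      (isCompact_closedBall 0 ϵ)).mono_set Metric.ball_subset_closedBall
  have gb : IntegrableOn (gr fun y => (f y).im) (Metric.ball (0 : E2) ϵ) :=
    ((gr_cont (cb.of_le (by norm_num))).continuousOn.integrableOn_compact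
      (isCompact_closedBall 0 ϵ)).mono_set Metric.ball_subset_closedBall
  have la : IntegrableOn (fun x => ((f x).re) ^ 2 + (lpl (fun y => (f y).re) x) ^ 2) L :=
    ((ca.continuous.pow 2).add ((lpl_cont ca).pow 2)).continuousOn.integrableOn_compact hL
  have lb : IntegrableOn (fun x => ((f x).im) ^ 2 + (lpl (fun y => (f y).im) x) ^ 2) L :=
    ((cb.continuous.pow 2).add ((lpl_cont cb).pow 2)).continuousOn.integrableOn_compact hL
  have i12 : IntegrableOn (fun p => ‖g p‖ ^ 2 + ‖lap g p‖ ^ 2) Ω := i1.add i2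
  have hpos : 0 < ϵ ^ ((4:ℝ)/3) := by positivity
  have m1 : ∫ x in L, (‖g x‖ ^ 2 + ‖lap g x‖ ^ 2) ≤ ∫ x in Ω, (‖g x‖ ^ 2 + ‖lap g x‖ ^ 2) :=
    setIntegral_mono_set i12 (Filter.Eventually.of_forall fun x => by positivity)
      (Filter.Eventually.of_forall hLΩ)
  have m2 := energy hΩo hg i1 i2 h
  have eL := setIntegral_congr_fun (μ := volume) hL.measurableSet gL
  rw [integral_add la lb] at eL
  rw [setIntegral_congr_fun measurableSet_ball gB, integral_add ga gb]
  refine (add_le_add Ha Hb).trans ?_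
  rw [← mul_add, ← eL]
  exact mul_le_mul_of_nonneg_left (m1.trans m2) (by positivity)
end
end

section
/- Let ε > 0 and let g be a continuously differentiable complex-valued function on the open annulus A = B_{2ε} ∖ B̄_ε with ∫_A (|∇g|² + |g|²) dx dy < ∞. Then there exists τ ∈ (ε, 2ε) such that ∫₀^{2π} |∂g̃/∂φ (τ, φ)|² dφ ≤ 4 ∫_A (|∇g|² + |g|²) dx dy, where g̃(r,φ) := g(r cos φ, r sin φ). -/
open MeasureTheory Real Set

noncomputable section

lemma lintegral_pt (h : E2 → ENNReal) : ∫⁻ p : ℝ × ℝ, h (pt p.1 p.2) = ∫⁻ p, h p := by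
  have h1 := (PiLp.volume_preserving_toLp (Fin 2)).lintegral_comp_emb
    (MeasurableEquiv.toLp 2 (Fin 2 → ℝ)).measurableEmbedding h
  have h2 := (volume_preserving_finTwoArrow ℝ).symm.lintegral_comp_emb
    (MeasurableEquiv.finTwoArrow.symm).measurableEmbedding
    (fun q : Fin 2 → ℝ => h (WithLp.toLp 2 q))
  rw [← h1, ← h2]
  rfl

lemma continuous_circ : Continuous (fun p : ℝ × ℝ => circ p.1 p.2) := by
  unfold circ pt
  have : Continuous (fun p : ℝ × ℝ => (![p.1 * Real.cos p.2, p.1 * Real.sin p.2] : Fin 2 → ℝ)) := by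
    refine continuous_pi fun i => ?_
    fin_cases i <;> simp <;> fun_prop
  exact (PiLp.continuous_toLp 2 _).comp this

lemma norm_circ (τ φ : ℝ) (h : 0 ≤ τ) : ‖circ τ φ‖ = τ := by
  rw [EuclideanSpace.norm_eq]
  simp only [circ, pt, Fin.sum_univ_two, Real.norm_eq_abs, sq_abs]
  simp only [PiLp.toLp_apply, Matrix.cons_val_zero, Matrix.cons_val_one]
  rw [show (τ * Real.cos φ) ^ 2 + (τ * Real.sin φ) ^ 2 = τ ^ 2 by
    nlinarith [Real.sin_sq_add_cos_sq φ], Real.sqrt_sq h]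

lemma circ_eq (τ φ : ℝ) : circ τ φ = (τ * Real.cos φ) • EuclideanSpace.single 0 1
    + (τ * Real.sin φ) • EuclideanSpace.single 1 1 := by
  ext i
  fin_cases i <;> simp [circ, pt]

lemma measurable_gradSq (g : E2 → ℂ) : Measurable (gradSq g) := by
  have h (i : Fin 2) : Measurable (pd i g) := measurable_fderiv_apply_const ℝ g _
  exact ((h 0).norm.pow_const 2).add ((h 1).norm.pow_const 2)

lemma norm_deriv_sq_le (g : E2 → ℂ) (τ φ : ℝ) (hd : DifferentiableAt ℝ g (circ τ φ)) :
    ‖deriv (fun ψ => g (circ τ ψ)) φ‖ ^ 2 ≤ τ ^ 2 * gradSq g (circ τ φ) := by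
  have hc : HasDerivAt (fun ψ => circ τ ψ) ((τ * -Real.sin φ) • EuclideanSpace.single (0 : Fin 2) (1 : ℝ)
      + (τ * Real.cos φ) • EuclideanSpace.single (1 : Fin 2) (1 : ℝ)) φ := by
    simp only [circ_eq]
    exact (((Real.hasDerivAt_cos φ).const_mul τ).smul_const _).add
      (((Real.hasDerivAt_sin φ).const_mul τ).smul_const _)
  have := (hd.hasFDerivAt.comp_hasDerivAt φ hc).deriv
  change deriv (fun ψ => g (circ τ ψ)) φ = _ at this
  rw [this, map_add, map_smul, map_smul]
  change ‖(τ * -Real.sin φ) • pd 0 g (circ τ φ) + (τ * Real.cos φ) • pd 1 g (circ τ φ)‖ ^ 2 ≤ _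
  unfold gradSq
  set a := pd 0 g (circ τ φ)
  set b := pd 1 g (circ τ φ)
  have h1 := norm_add_le ((τ * -Real.sin φ) • a) ((τ * Real.cos φ) • b)
  rw [norm_smul, norm_smul] at h1
  have h2 : ‖τ * -Real.sin φ‖ ^ 2 + ‖τ * Real.cos φ‖ ^ 2 = τ ^ 2 := by
    simp only [Real.norm_eq_abs, sq_abs]
    nlinarith [Real.sin_sq_add_cos_sq φ]
  rw [← h2]
  set s := ‖τ * -Real.sin φ‖
  set c := ‖τ * Real.cos φ‖
  calc _ ≤ (s * ‖a‖ + c * ‖b‖) ^ 2 := by gcongr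
    _ ≤ _ := by nlinarith [sq_nonneg (s * ‖b‖ - c * ‖a‖)]

/-- Lemma 4.4 of the paper. For `g` continuously differentiable on the
annulus `A = B_{2ε} ∖ B̄_ε` with finite `H¹` norm, there is a radius `τ ∈ (ε, 2ε)` on
whose circle the angular derivative of `g̃(r,φ) = g(r cos φ, r sin φ)` satisfies
`∫₀^{2π} |∂g̃/∂φ (τ,φ)|² dφ ≤ 4 ∫_A (|∇g|² + |g|²)`. -/
theorem angular_derivative_bound (ε : ℝ) (hε : 0 < ε) (g : E2 → ℂ)
    (hg : ContDiffOn ℝ 1 g (Metric.ball 0 (2 * ε) \ Metric.closedBall 0 ε))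
    (hint : IntegrableOn (fun p => gradSq g p + ‖g p‖ ^ 2)
      (Metric.ball 0 (2 * ε) \ Metric.closedBall 0 ε)) :
    ∃ τ ∈ Set.Ioo ε (2 * ε),
      ∫ φ in (0:ℝ)..(2 * π), ‖deriv (fun ψ => g (circ τ ψ)) φ‖ ^ 2
        ≤ 4 * ∫ p in Metric.ball (0 : E2) (2 * ε) \ Metric.closedBall 0 ε,
            (gradSq g p + ‖g p‖ ^ 2) := by
  set A : Set E2 := Metric.ball 0 (2 * ε) \ Metric.closedBall 0 ε with hA
  set M := ∫ p in A, (gradSq g p + ‖g p‖ ^ 2) with hM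
  have hAo : IsOpen A := Metric.isOpen_ball.sdiff Metric.isClosed_closedBall
  have hgn : ∀ p, 0 ≤ gradSq g p := fun p => by unfold gradSq; positivity
  have hM0 : 0 ≤ M := integral_nonneg fun p => add_nonneg (hgn p) (by positivity)
  have hMl : ∫⁻ p in A, ENNReal.ofReal (gradSq g p) ≤ ENNReal.ofReal M := by
    rw [hM, ofReal_integral_eq_lintegral_ofReal hint
      (Filter.Eventually.of_forall fun p => add_nonneg (hgn p) (by positivity))]
    refine lintegral_mono fun p => ENNReal.ofReal_le_ofReal ?_
    have : 0 ≤ ‖g p‖ ^ 2 := by positivity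
    linarith
  set h : E2 → ENNReal := A.indicator fun p => ENNReal.ofReal (gradSq g p) with hh
  have hhm : Measurable h := (measurable_gradSq g).ennreal_ofReal.indicator hAo.measurableSet
  rw [← lintegral_indicator hAo.measurableSet, ← hh, ← lintegral_pt,
    ← lintegral_comp_polarCoord_symm (fun p => h (pt p.1 p.2))] at hMl
  have hkm : Measurable (fun p : ℝ × ℝ => ENNReal.ofReal p.1 * h (circ p.1 p.2)) :=
    measurable_fst.ennreal_ofReal.mul (hhm.comp continuous_circ.measurable)
  have hT : ∫⁻ r in Ioi (0:ℝ), ∫⁻ φ in Ioo (-π) π, ENNReal.ofReal r * h (circ r φ)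
      ≤ ENNReal.ofReal M := by
    refine le_trans (le_of_eq ?_) hMl
    rw [← lintegral_prod (fun p : ℝ × ℝ => ENNReal.ofReal p.1 * h (circ p.1 p.2))
      hkm.aemeasurable, Measure.prod_restrict]
    rfl
  have hT2 : ∫⁻ r in Ioo ε (2 * ε), ∫⁻ φ in Ioo (-π) π, ENNReal.ofReal r * h (circ r φ)
      ≤ ENNReal.ofReal M :=
    (lintegral_mono_set fun r hr => hε.trans hr.1).trans hT
  have hvol : volume (Ioo ε (2 * ε)) = ENNReal.ofReal ε := by
    rw [Real.volume_Ioo]; congr 1; ring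
  obtain ⟨τ, hτ, hle⟩ := exists_le_setLAverage (μ := volume) (s := Ioo ε (2 * ε))
    (f := fun r => ∫⁻ φ in Ioo (-π) π, ENNReal.ofReal r * h (circ r φ))
    (by rw [hvol]; simpa using hε) (by rw [hvol]; exact ENNReal.ofReal_ne_top)
    hkm.lintegral_prod_right'.aemeasurable
  have hτ0 : 0 < τ := hε.trans hτ.1
  refine ⟨τ, hτ, ?_⟩
  rw [setLAverage_eq, hvol] at hle
  replace hle := hle.trans (ENNReal.div_le_div_right hT2 _)
  rw [← ENNReal.ofReal_div_of_pos hε] at hle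
  have hmem : ∀ φ, circ τ φ ∈ A := fun φ => by
    have := norm_circ τ φ hτ0.le
    rw [hA]
    simp only [Set.mem_diff, Metric.mem_ball, Metric.mem_closedBall, dist_zero_right, this]
    exact ⟨hτ.2, not_le.2 hτ.1⟩
  have hper : Function.Periodic (fun φ => ‖deriv (fun ψ => g (circ τ ψ)) φ‖ ^ 2) (2 * π) := by
    intro φ
    have : (fun ψ => g (circ τ (ψ + 2 * π))) = fun ψ => g (circ τ ψ) := by
      funext ψ; simp [circ]
    have h2 := deriv_comp_add_const (fun ψ => g (circ τ ψ)) (2 * π) φ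
    rw [this] at h2
    simp only [h2]
  have e := hper.intervalIntegral_add_eq 0 (-π)
  rw [zero_add, show -π + 2 * π = π by ring] at e
  rw [e, intervalIntegral.integral_of_le (by linarith [Real.pi_pos]), integral_Ioc_eq_integral_Ioo,
    integral_eq_lintegral_of_nonneg_ae (Filter.Eventually.of_forall fun φ => by positivity)
      ((measurable_deriv _).norm.pow_const 2).aestronglyMeasurable]
  refine ENNReal.toReal_le_of_le_ofReal (by positivity) ?_
  calc ∫⁻ φ in Ioo (-π) π, ENNReal.ofReal (‖deriv (fun ψ => g (circ τ ψ)) φ‖ ^ 2)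
      ≤ ∫⁻ φ in Ioo (-π) π, ENNReal.ofReal τ * (ENNReal.ofReal τ * h (circ τ φ)) := by
        refine lintegral_mono fun φ => ?_
        have hd : DifferentiableAt ℝ g (circ τ φ) :=
          (hg.differentiableOn one_ne_zero).differentiableAt (hAo.mem_nhds (hmem φ))
        rw [hh, Set.indicator_of_mem (hmem φ), ← ENNReal.ofReal_mul hτ0.le,
          ← ENNReal.ofReal_mul hτ0.le]
        refine ENNReal.ofReal_le_ofReal ((norm_deriv_sq_le g τ φ hd).trans (le_of_eq ?_))
        ring
    _ = ENNReal.ofReal τ * ∫⁻ φ in Ioo (-π) π, ENNReal.ofReal τ * h (circ τ φ) :=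
        lintegral_const_mul' _ _ ENNReal.ofReal_ne_top
    _ ≤ ENNReal.ofReal τ * ENNReal.ofReal (M / ε) := by gcongr
    _ = ENNReal.ofReal (τ * (M / ε)) := (ENNReal.ofReal_mul hτ0.le).symm
    _ ≤ ENNReal.ofReal (4 * M) := by
        refine ENNReal.ofReal_le_ofReal ?_
        rw [← mul_div_assoc, div_le_iff₀ hε]
        nlinarith [mul_nonneg hM0 hε.le, mul_le_mul_of_nonneg_right hτ.2.le hM0]
end
end
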